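/- Let P = [p_0:0:p_2] and Q = [q_0:q_1:0] be points of P^2 with p_0 p_2 q_0 q_1 ≠ 0, and let 1 ≤ m ≤ n be integers. Then I(P)^m ⋆ I(Q)^n = ⟨x_1^m, x_2^n⟩, and consequently I(P ⋆ Q)^{m+n−1} ⊆ I(P)^m ⋆ I(Q)^n ⊆ I(P ⋆ Q)^m, where I(P ⋆ Q) = ⟨x_1, x_2⟩; moreover I(P)^m ⋆ I(Q)^n ≠ I(P ⋆ Q)^{m+n−1} unless m = n = 1. -/

import Mathlib

open MvPolynomial

noncomputable section

variable {K : Type*} [Field K]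

/-- The Hadamard product of two ideals `I, J ⊆ K[x_0,x_1,x_2]`: introduce new variables
`y_0,y_1,y_2` and `z_0,z_1,z_2` (encoded via a sum type), map `I` via `x_i ↦ y_i`, `J` via
`x_i ↦ z_i`, add the relations `x_i − y_i z_i`, and eliminate `y, z` (i.e. take the
preimage in `K[x_0,x_1,x_2]`). -/
def hadamard (I J : Ideal (MvPolynomial (Fin 3) K)) : Ideal (MvPolynomial (Fin 3) K) :=
  Ideal.comap
    (rename (Sum.inl : Fin 3 → Fin 3 ⊕ (Fin 3 ⊕ Fin 3)))
    (Ideal.map (rename (fun i : Fin 3 => (Sum.inr (Sum.inl i) : Fin 3 ⊕ (Fin 3 ⊕ Fin 3)))) I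
      + Ideal.map (rename (fun i : Fin 3 => (Sum.inr (Sum.inr i) : Fin 3 ⊕ (Fin 3 ⊕ Fin 3)))) J
      + Ideal.span { f | ∃ i : Fin 3,
          f = X (Sum.inl i) - X (Sum.inr (Sum.inl i)) * X (Sum.inr (Sum.inr i)) })

/-- The homogeneous vanishing ideal of the point `P = [p_0:p_1:p_2] ∈ ℙ²`, generated by
the forms `p_j x_i − p_i x_j`. -/
def pointIdeal (p : Fin 3 → K) : Ideal (MvPolynomial (Fin 3) K) :=
  Ideal.span { f | ∃ i j : Fin 3, f = C (p j) * X i - C (p i) * X j }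

/-- The irrelevant ideal `𝔪 = ⟨x_0,x_1,x_2⟩` of `K[x_0,x_1,x_2]`. -/
def irrelevantIdeal (K : Type*) [Field K] : Ideal (MvPolynomial (Fin 3) K) :=
  Ideal.span (Set.range X)

/-!
Eliminating the variables of a graph shows that `I ⋆ J` is the preimage of `I(y) + J(z)` under
`x_i ↦ y_i z_i`. Hence `x_1^m ∈ I(P)^m` and `x_2^n ∈ I(Q)^n` both lie in `I(P)^m ⋆ I(Q)^n`.
Conversely, choose `y` proportional to `P` modulo `x_1` and `z` proportional to `Q` modulo `x_2`
with `y ⋆ z = (x_0, x_1, x_0 x_2)`: then `f(x_0, x_1, x_0 x_2) ∈ ⟨x_1^m, x_2^n⟩` for every `f` in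
the Hadamard product. This substitution is injective on monomials and preserves their exponents in
`x_1` and `x_2`, so `f` itself lies in the monomial ideal. The two ideals in the last claim differ
because powers of `I(P ⋆ Q)` contain no monomial of too small a degree.
-/

section Elimination

variable {σ τ R : Type*} [CommRing R]

/-- The ideal of the graph of the polynomial map with coordinates `g`, with the variables of the
target indexed by `Sum.inl` and those of the source by `Sum.inr`. -/
def graphIdeal (g : σ → MvPolynomial τ R) : Ideal (MvPolynomial (σ ⊕ τ) R) :=
  Ideal.span (Set.range fun i => X (Sum.inl i) - rename Sum.inr (g i))

theorem sub_rename_bind₁_mem_graphIdeal (g : σ → MvPolynomial τ R) (f : MvPolynomial (σ ⊕ τ) R) :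
    f - rename Sum.inr (bind₁ (Sum.elim g X) f) ∈ graphIdeal g := by
  have mkₐ_comp_eq : (Ideal.Quotient.mkₐ R (graphIdeal g)).comp
      ((rename Sum.inr).comp (bind₁ (Sum.elim g X))) = Ideal.Quotient.mkₐ R (graphIdeal g) := by
    refine algHom_ext fun i => ?_
    rcases i with i | j
    · have hi : X (Sum.inl i) - rename Sum.inr (g i) ∈ graphIdeal g :=
        Ideal.subset_span (Set.mem_range_self i)
      simpa using (Ideal.Quotient.eq.mpr hi).symm
    · simp
  exact Ideal.Quotient.eq.mp (DFunLike.congr_fun mkₐ_comp_eq f).symm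

theorem comap_rename_inl_sup_graphIdeal (g : σ → MvPolynomial τ R)
    (A : Ideal (MvPolynomial τ R)) :
    (A.map (rename Sum.inr) ⊔ graphIdeal g).comap (rename Sum.inl) = A.comap (bind₁ g) := by
  have sup_le_comap :
      A.map (rename Sum.inr) ⊔ graphIdeal g ≤ A.comap (bind₁ (Sum.elim g X)) := by
    refine sup_le (Ideal.map_le_iff_le_comap.mpr fun a ha => ?_) (Ideal.span_le.mpr ?_)
    · simpa [bind₁_rename] using ha
    · rintro _ ⟨i, rfl⟩
      simp [bind₁_rename]
  ext f
  rw [Ideal.mem_comap, Ideal.mem_comap]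
  constructor
  · intro hf
    simpa [bind₁_rename] using sup_le_comap hf
  · intro hf
    have hdiff := sub_rename_bind₁_mem_graphIdeal g (rename Sum.inl f)
    rw [bind₁_rename, Sum.elim_comp_inl] at hdiff
    exact (Submodule.sub_mem_iff_left _ (Ideal.mem_sup_left (Ideal.mem_map_of_mem _ hf))).mp
      (Ideal.mem_sup_right hdiff)

end Elimination

section MonomialSubstitution

variable {σ τ R : Type*} [CommSemiring R]

variable (R) in
/-- The substitution of monomials for variables that sends `x^d` to `x^(e d)`, for an additive
map `e` of exponents. -/
def monomialMap (e : (σ →₀ ℕ) →+ (τ →₀ ℕ)) : MvPolynomial σ R →ₐ[R] MvPolynomial τ R :=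
  aeval fun i => monomial (e (Finsupp.single i 1)) 1

theorem monomialMap_monomial (e : (σ →₀ ℕ) →+ (τ →₀ ℕ)) (d : σ →₀ ℕ) (a : R) :
    monomialMap R e (monomial d a) = monomial (e d) a := by
  have hd : d.sum (fun i k => k • e (Finsupp.single i 1)) = e d := by
    conv_rhs => rw [← d.sum_single, map_finsuppSum]
    simp [← map_nsmul]
  simp only [monomialMap, aeval_monomial, algebraMap_eq, monomial_pow, one_pow]
  rw [← monomial_finsupp_sum_index, hd]

theorem coeff_monomialMap {e : (σ →₀ ℕ) →+ (τ →₀ ℕ)} (he : Function.Injective e) (d : σ →₀ ℕ)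
    (f : MvPolynomial σ R) : coeff (e d) (monomialMap R e f) = coeff d f := by
  classical
  induction f using MvPolynomial.induction_on' with
  | monomial u a => simp only [monomialMap_monomial, coeff_monomial, he.eq_iff]
  | add p q hp hq => simp only [map_add, coeff_add, hp, hq]

theorem mem_span_X_pow_pair {i j : σ} {m n : ℕ} {f : MvPolynomial σ R} :
    f ∈ Ideal.span {X i ^ m, X j ^ n} ↔ ∀ d ∈ f.support, m ≤ d i ∨ n ≤ d j := by
  have := mem_ideal_span_monomial_image (x := f) (s := {Finsupp.single i m, Finsupp.single j n})
  simpa only [Set.image_pair, ← X_pow_eq_monomial, Set.mem_insert_iff, Set.mem_singleton_iff,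
    exists_eq_or_imp, exists_eq_left, Finsupp.single_le_iff] using this

theorem mem_span_X_pow_pair_of_monomialMap_mem {e : (σ →₀ ℕ) →+ (τ →₀ ℕ)}
    (he : Function.Injective e) {i j : σ} {i' j' : τ} (hi : ∀ d, e d i' = d i)
    (hj : ∀ d, e d j' = d j) {m n : ℕ} {f : MvPolynomial σ R}
    (hf : monomialMap R e f ∈ Ideal.span {X i' ^ m, X j' ^ n}) :
    f ∈ Ideal.span {X i ^ m, X j ^ n} := by
  rw [mem_span_X_pow_pair] at hf ⊢
  intro d hd
  rw [← hi, ← hj]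
  exact hf (e d) (by rwa [mem_support_iff, coeff_monomialMap he, ← mem_support_iff])

/-- The exponents of the substitution `x_2 ↦ x_0 x_2` fixing `x_0` and `x_1`. -/
def shearExponent : (Fin 3 →₀ ℕ) →+ (Fin 3 →₀ ℕ) :=
  AddMonoidHom.id _ + (Finsupp.singleAddHom 0).comp (Finsupp.applyAddHom 2)

theorem shearExponent_apply (d : Fin 3 →₀ ℕ) :
    shearExponent d = d + Finsupp.single 0 (d 2) := rfl

theorem shearExponent_injective : Function.Injective shearExponent := by
  intro d d' h
  have h₂ : d 2 = d' 2 := by simpa [shearExponent_apply] using DFunLike.congr_fun h 2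
  rw [shearExponent_apply, shearExponent_apply, h₂] at h
  exact add_right_cancel h

theorem monomialMap_shearExponent :
    monomialMap R shearExponent = aeval ![X 0, X 1, X 0 * X 2] := by
  refine algHom_ext fun i => ?_
  rw [aeval_X, X, monomialMap_monomial]
  fin_cases i <;> simp [shearExponent_apply, X, monomial_mul, add_comm]

end MonomialSubstitution

section PairPowers

variable {R : Type*} [CommSemiring R]

theorem sup_pow_le_pow_sup_pow (I J : Ideal R) {m n k : ℕ} (h : m + n ≤ k + 1) :
    (I ⊔ J) ^ k ≤ I ^ m ⊔ J ^ n := by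
  rw [← Ideal.add_eq_sup, add_pow, Ideal.sum_eq_sup]
  refine Finset.sup_le fun i _ => Ideal.mul_le_left.trans ?_
  rcases le_or_gt m i with hmi | hmi
  · exact Ideal.mul_le_left.trans ((Ideal.pow_le_pow_right hmi).trans le_sup_left)
  · have hni : n ≤ k - i := by lia
    exact Ideal.mul_le_right.trans ((Ideal.pow_le_pow_right hni).trans le_sup_right)

theorem span_pair_pow_le_span_pow_pair (a b : R) {m n k : ℕ} (h : m + n ≤ k + 1) :
    Ideal.span {a, b} ^ k ≤ Ideal.span {a ^ m, b ^ n} := by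
  simpa only [Ideal.span_insert, Ideal.span_singleton_pow] using
    sup_pow_le_pow_sup_pow (Ideal.span {a}) (Ideal.span {b}) h

theorem span_pow_pair_le_span_pair_pow_min (a b : R) (m n : ℕ) :
    Ideal.span {a ^ m, b ^ n} ≤ Ideal.span {a, b} ^ min m n := by
  rw [Ideal.span_insert, sup_le_iff, Ideal.span_singleton_le_iff_mem,
    Ideal.span_singleton_le_iff_mem]
  have ha : a ∈ Ideal.span {a, b} := Ideal.subset_span (Set.mem_insert a {b})
  have hb : b ∈ Ideal.span {a, b} := Ideal.subset_span (Set.mem_insert_of_mem a rfl)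
  exact ⟨Ideal.pow_le_pow_right (min_le_left m n) (Ideal.pow_mem_pow ha m),
    Ideal.pow_le_pow_right (min_le_right m n) (Ideal.pow_mem_pow hb n)⟩

end PairPowers

section PointIdeal

theorem pointIdeal_le_comap_aeval {A : Type*} [CommRing A] [Algebra K A] {L : Ideal A}
    {p : Fin 3 → K} {y : Fin 3 → A} (t : A) (h : ∀ i, y i - p i • t ∈ L) :
    pointIdeal p ≤ L.comap (aeval y) := by
  refine Ideal.span_le.mpr ?_
  rintro _ ⟨i, j, rfl⟩
  have hij : p j • y i - p i • y j = p j • (y i - p i • t) - p i • (y j - p j • t) := by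
    rw [smul_sub, smul_sub, smul_comm (p j), sub_sub_sub_cancel_right]
  have hmem : p j • y i - p i • y j ∈ L := by
    rw [hij]
    exact L.sub_mem (Submodule.smul_of_tower_mem L (p j) (h i))
      (Submodule.smul_of_tower_mem L (p i) (h j))
  simpa [Algebra.smul_def] using hmem

theorem pointIdeal_pow_le_comap_aeval {A : Type*} [CommRing A] [Algebra K A] {L : Ideal A}
    {p : Fin 3 → K} {y : Fin 3 → A} {g : A} {k : ℕ} (hg : g ^ k ∈ L) (t : A)
    (h : ∀ i, g ∣ y i - p i • t) : pointIdeal p ^ k ≤ L.comap (aeval y) := by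
  have hle : pointIdeal p ≤ (Ideal.span {g}).comap (aeval y) :=
    pointIdeal_le_comap_aeval t fun i => Ideal.mem_span_singleton.mpr (h i)
  refine (Ideal.pow_right_mono hle k).trans ((Ideal.le_comap_pow _ k).trans (Ideal.comap_mono ?_))
  rwa [Ideal.span_singleton_pow, Ideal.span_singleton_le_iff_mem]

theorem X_mem_pointIdeal {p : Fin 3 → K} {i j : Fin 3} (hi : p i = 0) (hj : p j ≠ 0) :
    X i ∈ pointIdeal p := by
  have h : C (p j) * X i - C (p i) * X j ∈ pointIdeal p := Ideal.subset_span ⟨i, j, rfl⟩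
  rw [hi, C_0, zero_mul, sub_zero] at h
  exact (Ideal.unit_mul_mem_iff_mem _ ((isUnit_iff_ne_zero.mpr hj).map C)).mp h

theorem pointIdeal_eq_span_X_compl {p : Fin 3 → K} {i : Fin 3} (hi : p i ≠ 0)
    (h : ∀ j ≠ i, p j = 0) : pointIdeal p = Ideal.span (X '' {i}ᶜ) := by
  let L : Ideal (MvPolynomial (Fin 3) K) := Ideal.span (X '' {i}ᶜ)
  apply le_antisymm
  · have hX : ∀ j, X j - p j • ((p i)⁻¹ • X i) ∈ L := fun j => by
      obtain rfl | hj := eq_or_ne j i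
      · simp [hi]
      · simpa [h j hj] using Ideal.subset_span (Set.mem_image_of_mem X hj)
    simpa [aeval_X_left] using pointIdeal_le_comap_aeval ((p i)⁻¹ • X i) hX
  · rw [Ideal.span_le, Set.image_subset_iff]
    exact fun j hj => X_mem_pointIdeal (h j hj) hi

theorem pointIdeal_mul_eq_span_X_pair {p₀ q₀ : K} (hp₀ : p₀ ≠ 0) (hq₀ : q₀ ≠ 0) (p₂ q₁ : K) :
    pointIdeal (fun i => ![p₀, 0, p₂] i * ![q₀, q₁, 0] i) = Ideal.span {X 1, X 2} := by
  have hcompl : ({0}ᶜ : Set (Fin 3)) = {1, 2} := by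
    ext i
    fin_cases i <;> simp
  rw [pointIdeal_eq_span_X_compl (i := 0) (by simp [hp₀, hq₀])
    (fun j hj => by fin_cases j <;> simp_all), hcompl, Set.image_pair]

theorem pointIdeal_le_irrelevantIdeal (p : Fin 3 → K) : pointIdeal p ≤ irrelevantIdeal K := by
  refine Ideal.span_le.mpr ?_
  rintro _ ⟨i, j, rfl⟩
  exact sub_mem (Ideal.mul_mem_left _ _ (Ideal.subset_span (Set.mem_range_self i)))
    (Ideal.mul_mem_left _ _ (Ideal.subset_span (Set.mem_range_self j)))

theorem le_of_X_pow_mem_pointIdeal_pow {p : Fin 3 → K} {i : Fin 3} {m k : ℕ}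
    (h : X i ^ m ∈ pointIdeal p ^ k) : k ≤ m := by
  have h' : X i ^ m ∈ idealOfVars (Fin 3) K ^ k :=
    Ideal.pow_right_mono (pointIdeal_le_irrelevantIdeal p) k h
  rwa [X_pow_eq_monomial, monomial_mem_pow_idealOfVars_iff _ _ one_ne_zero,
    Finsupp.degree_single] at h'

end PointIdeal

section Hadamard

theorem hadamard_eq_comap (I J : Ideal (MvPolynomial (Fin 3) K)) :
    hadamard I J = (I.map (rename Sum.inl) ⊔ J.map (rename Sum.inr)).comap
      (bind₁ fun i => X (Sum.inl i) * X (Sum.inr i)) := by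
  have hgraph : {f | ∃ i : Fin 3, f =
      X (Sum.inl i) - X (Sum.inr (Sum.inl i)) * X (Sum.inr (Sum.inr i))} =
      Set.range fun i : Fin 3 => (X (Sum.inl i) - rename Sum.inr (X (Sum.inl i) * X (Sum.inr i)) :
        MvPolynomial (Fin 3 ⊕ (Fin 3 ⊕ Fin 3)) K) := by
    ext f
    simp [eq_comm]
  rw [← comap_rename_inl_sup_graphIdeal, graphIdeal, Ideal.map_sup, Ideal.map_mapₐ,
    Ideal.map_mapₐ, rename_comp_rename, rename_comp_rename, ← hgraph]
  rfl

theorem monomial_mem_hadamard {I J : Ideal (MvPolynomial (Fin 3) K)} {d : Fin 3 →₀ ℕ}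
    (h : monomial d 1 ∈ I ∨ monomial d 1 ∈ J) : monomial d 1 ∈ hadamard I J := by
  have hd : bind₁ (fun i => X (Sum.inl i) * X (Sum.inr i)) (monomial d (1 : K)) =
      rename Sum.inl (monomial d 1) * rename Sum.inr (monomial d 1) := by
    simp only [monomial_eq, C_1, one_mul, Finsupp.prod, map_prod, map_pow, bind₁_X_right, rename_X,
      mul_pow, Finset.prod_mul_distrib]
  rw [hadamard_eq_comap, Ideal.mem_comap, hd]
  rcases h with h | h
  · exact Ideal.mem_sup_left (Ideal.mul_mem_right _ _ (Ideal.mem_map_of_mem _ h))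
  · exact Ideal.mem_sup_right (Ideal.mul_mem_left _ _ (Ideal.mem_map_of_mem _ h))

theorem hadamard_le_comap_aeval_mul {A : Type*} [CommRing A] [Algebra K A] {L : Ideal A}
    {I J : Ideal (MvPolynomial (Fin 3) K)} {y z : Fin 3 → A}
    (hy : I ≤ L.comap (aeval y)) (hz : J ≤ L.comap (aeval z)) :
    hadamard I J ≤ L.comap (aeval (y * z)) := by
  have sup_le_comap : I.map (rename Sum.inl) ⊔ J.map (rename Sum.inr) ≤
      L.comap (aeval (R := K) (Sum.elim y z)) :=
    sup_le (Ideal.map_le_iff_le_comap.mpr fun f hf => by simpa [aeval_rename] using hy hf)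
      (Ideal.map_le_iff_le_comap.mpr fun f hf => by simpa [aeval_rename] using hz hf)
  have comp_eq : (aeval (R := K) (Sum.elim y z)).comp
      (bind₁ fun i => X (Sum.inl i) * X (Sum.inr i)) = aeval (y * z) :=
    algHom_ext fun i => by simp
  intro f hf
  rw [hadamard_eq_comap] at hf
  rw [← comp_eq]
  exact sup_le_comap hf

variable {p₀ p₂ q₀ q₁ : K}

theorem hadamard_pow_pointIdeal_le_comap_shear (hp₀ : p₀ ≠ 0) (hp₂ : p₂ ≠ 0) (hq₀ : q₀ ≠ 0)
    (hq₁ : q₁ ≠ 0) (m n : ℕ) :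
    hadamard (pointIdeal ![p₀, 0, p₂] ^ m) (pointIdeal ![q₀, q₁, 0] ^ n) ≤
      (Ideal.span {X 1 ^ m, X 2 ^ n}).comap (monomialMap K shearExponent) := by
  let L : Ideal (MvPolynomial (Fin 3) K) := Ideal.span {X 1 ^ m, X 2 ^ n}
  let y : Fin 3 → MvPolynomial (Fin 3) K := ![X 0, (q₀ / q₁) • X 1, (p₂ / p₀) • X 0]
  let z : Fin 3 → MvPolynomial (Fin 3) K := ![1, (q₁ / q₀) • 1, (p₀ / p₂) • X 2]
  have hy : pointIdeal ![p₀, 0, p₂] ^ m ≤ L.comap (aeval y) := by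
    refine pointIdeal_pow_le_comap_aeval (Ideal.subset_span (Set.mem_insert _ _)) (p₀⁻¹ • X 0) ?_
    intro i
    fin_cases i <;> simp [y, hp₀, smul_smul, div_eq_mul_inv, dvd_smul_of_dvd]
  have hz : pointIdeal ![q₀, q₁, 0] ^ n ≤ L.comap (aeval z) := by
    refine pointIdeal_pow_le_comap_aeval (Ideal.subset_span (Set.mem_insert_of_mem _ rfl))
      (q₀⁻¹ • 1) ?_
    intro i
    fin_cases i <;> simp [z, hq₀, smul_smul, div_eq_mul_inv, dvd_smul_of_dvd]
  have hyz : y * z = ![X 0, X 1, X 0 * X 2] := by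
    ext1 i
    fin_cases i <;> simp [y, z, smul_smul, hp₀, hp₂, hq₀, hq₁]
  rw [monomialMap_shearExponent, ← hyz]
  exact hadamard_le_comap_aeval_mul hy hz

theorem hadamard_pow_pointIdeal_eq_span (hp₀ : p₀ ≠ 0) (hp₂ : p₂ ≠ 0) (hq₀ : q₀ ≠ 0)
    (hq₁ : q₁ ≠ 0) (m n : ℕ) :
    hadamard (pointIdeal ![p₀, 0, p₂] ^ m) (pointIdeal ![q₀, q₁, 0] ^ n) =
      Ideal.span {X 1 ^ m, X 2 ^ n} := by
  apply le_antisymm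
  · intro f hf
    exact mem_span_X_pow_pair_of_monomialMap_mem shearExponent_injective
      (fun d => by simp [shearExponent_apply]) (fun d => by simp [shearExponent_apply])
      (hadamard_pow_pointIdeal_le_comap_shear hp₀ hp₂ hq₀ hq₁ m n hf)
  · have hP : X 1 ^ m ∈ pointIdeal ![p₀, 0, p₂] ^ m :=
      Ideal.pow_mem_pow (X_mem_pointIdeal (j := 0) (by simp) (by simpa)) m
    have hQ : X 2 ^ n ∈ pointIdeal ![q₀, q₁, 0] ^ n :=
      Ideal.pow_mem_pow (X_mem_pointIdeal (j := 0) (by simp) (by simpa)) n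
    rw [X_pow_eq_monomial] at hP hQ
    rw [X_pow_eq_monomial, X_pow_eq_monomial, Ideal.span_le]
    exact Set.pair_subset (monomial_mem_hadamard (.inl hP)) (monomial_mem_hadamard (.inr hQ))

end Hadamard

theorem hadamard_pow_pointIdeal_two_zero_coords_general
    (p₀ p₂ q₀ q₁ : K) (h : p₀ * p₂ * q₀ * q₁ ≠ 0) (m n : ℕ) (hm : 1 ≤ m) (hn : 1 ≤ n) :
    hadamard (pointIdeal ![p₀, 0, p₂] ^ m) (pointIdeal ![q₀, q₁, 0] ^ n)
        = Ideal.span {(X 1 : MvPolynomial (Fin 3) K) ^ m, (X 2 : MvPolynomial (Fin 3) K) ^ n} ∧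
    pointIdeal (fun i => ![p₀, 0, p₂] i * ![q₀, q₁, 0] i)
        = Ideal.span {(X 1 : MvPolynomial (Fin 3) K), X 2} ∧
    pointIdeal (fun i => ![p₀, 0, p₂] i * ![q₀, q₁, 0] i) ^ (m + n - 1)
        ≤ hadamard (pointIdeal ![p₀, 0, p₂] ^ m) (pointIdeal ![q₀, q₁, 0] ^ n) ∧
    hadamard (pointIdeal ![p₀, 0, p₂] ^ m) (pointIdeal ![q₀, q₁, 0] ^ n)
        ≤ pointIdeal (fun i => ![p₀, 0, p₂] i * ![q₀, q₁, 0] i) ^ min m n ∧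
    (¬ (m = 1 ∧ n = 1) →
      hadamard (pointIdeal ![p₀, 0, p₂] ^ m) (pointIdeal ![q₀, q₁, 0] ^ n)
        ≠ pointIdeal (fun i => ![p₀, 0, p₂] i * ![q₀, q₁, 0] i) ^ (m + n - 1)) := by
  obtain ⟨⟨⟨hp₀, hp₂⟩, hq₀⟩, hq₁⟩ : ((p₀ ≠ 0 ∧ p₂ ≠ 0) ∧ q₀ ≠ 0) ∧ q₁ ≠ 0 := by
    simpa only [mul_ne_zero_iff] using h
  have hHad := hadamard_pow_pointIdeal_eq_span hp₀ hp₂ hq₀ hq₁ m n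
  have hPQ : pointIdeal (fun i => ![p₀, 0, p₂] i * ![q₀, q₁, 0] i) =
      Ideal.span {(X 1 : MvPolynomial (Fin 3) K), X 2} :=
    pointIdeal_mul_eq_span_X_pair hp₀ hq₀ p₂ q₁
  refine ⟨hHad, hPQ, ?_, ?_, fun hne heq => hne ?_⟩
  · rw [hHad, hPQ]
    exact span_pair_pow_le_span_pow_pair _ _ (by lia)
  · rw [hHad, hPQ]
    exact span_pow_pair_le_span_pair_pow_min _ _ m n
  · have hspan := (hHad.symm.trans heq).le
    have hm' : m + n - 1 ≤ m :=
      le_of_X_pow_mem_pointIdeal_pow (hspan (Ideal.subset_span (Set.mem_insert _ _)))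
    have hn' : m + n - 1 ≤ n :=
      le_of_X_pow_mem_pointIdeal_pow (hspan (Ideal.subset_span (Set.mem_insert_of_mem _ rfl)))
    lia

/-- Let `P = [p_0:0:p_2]` and `Q = [q_0:q_1:0]` with `p_0 p_2 q_0 q_1 ≠ 0`, and let
`1 ≤ m ≤ n`. Then `I(P)^m ⋆ I(Q)^n = ⟨x_1^m, x_2^n⟩`, where `I(P ⋆ Q) = ⟨x_1, x_2⟩`;
consequently `I(P ⋆ Q)^{m+n−1} ⊆ I(P)^m ⋆ I(Q)^n ⊆ I(P ⋆ Q)^m`, and moreover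
`I(P)^m ⋆ I(Q)^n ≠ I(P ⋆ Q)^{m+n−1}` unless `m = n = 1`. -/
theorem hadamard_pow_pointIdeal_two_zero_coords [IsAlgClosed K]
    (p₀ p₂ q₀ q₁ : K) (h : p₀ * p₂ * q₀ * q₁ ≠ 0) (m n : ℕ) (hm : 1 ≤ m) (hmn : m ≤ n) :
    hadamard (pointIdeal ![p₀, 0, p₂] ^ m) (pointIdeal ![q₀, q₁, 0] ^ n)
        = Ideal.span {(X 1 : MvPolynomial (Fin 3) K) ^ m, (X 2 : MvPolynomial (Fin 3) K) ^ n} ∧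
    pointIdeal (fun i => ![p₀, 0, p₂] i * ![q₀, q₁, 0] i)
        = Ideal.span {(X 1 : MvPolynomial (Fin 3) K), X 2} ∧
    pointIdeal (fun i => ![p₀, 0, p₂] i * ![q₀, q₁, 0] i) ^ (m + n - 1)
        ≤ hadamard (pointIdeal ![p₀, 0, p₂] ^ m) (pointIdeal ![q₀, q₁, 0] ^ n) ∧
    hadamard (pointIdeal ![p₀, 0, p₂] ^ m) (pointIdeal ![q₀, q₁, 0] ^ n)
        ≤ pointIdeal (fun i => ![p₀, 0, p₂] i * ![q₀, q₁, 0] i) ^ m ∧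
    (¬ (m = 1 ∧ n = 1) →
      hadamard (pointIdeal ![p₀, 0, p₂] ^ m) (pointIdeal ![q₀, q₁, 0] ^ n)
        ≠ pointIdeal (fun i => ![p₀, 0, p₂] i * ![q₀, q₁, 0] i) ^ (m + n - 1)) := by
  simpa only [min_eq_left hmn] using
    hadamard_pow_pointIdeal_two_zero_coords_general p₀ p₂ q₀ q₁ h m n hm (hm.trans hmn)
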